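/- Let n ≥ m ≥ 1, Z ∈ {X,Y}, and u, v ∈ A*. If u and v agree on rankers from uR^Z_{2m-1,2n-1} (i.e., the same rankers of uR^Z_{2m-1,2n-1} are defined on u and v), then u and v agree on condensed rankers from uR^Z_{m,n} (i.e., u ⊳_{m,n} v when Z = X, and u ⊲_{m,n} v when Z = Y). -/

import Mathlib

namespace RankerPaper

variable {A : Type*} [DecidableEq A]

/-- Letters of rankers: `X a` ("next `a` to the right") and `Y a` ("next `a` to the left"). -/
inductive RLetter (A : Type*) where
  | X : A → RLetter A
  | Y : A → RLetter A
  deriving DecidableEq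

/-- Least `a`-position of `u` strictly greater than `q` (positions are 1-indexed). -/
def nextOcc (u : List A) (a : A) (q : ℕ) : Option ℕ :=
  ((List.range (u.length + 2)).filter (fun i => decide (q < i ∧ u[i-1]? = some a))).head?

/-- Greatest `a`-position of `u` strictly less than `q` (positions are 1-indexed). -/
def prevOcc (u : List A) (a : A) (q : ℕ) : Option ℕ :=
  ((List.range (u.length + 2)).filter
    (fun i => decide (1 ≤ i ∧ i < q ∧ u[i-1]? = some a))).getLast?

/-- One evaluation step of a ranker letter from position `q`. -/
def stepR (u : List A) : RLetter A → ℕ → Option ℕ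
  | .X a, q => nextOcc u a q
  | .Y a, q => prevOcc u a q

/-- Evaluation of a ranker from position `q`, processing letters left to right. -/
def evalFrom (u : List A) : List (RLetter A) → ℕ → Option ℕ
  | [], q => some q
  | z :: r, q => (stepR u z q).bind (evalFrom u r)

/-- Starting position: `0` for an `X`-letter, `|u|+1` for a `Y`-letter. -/
def startPos (u : List A) : RLetter A → ℕ
  | .X _ => 0
  | .Y _ => u.length + 1

/-- The position `r(u)` defined by the ranker `r` on `u` (`none` if undefined;
empty rankers are considered undefined, rankers being nonempty words). -/
def evalR (u : List A) (r : List (RLetter A)) : Option ℕ :=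
  match r with
  | [] => none
  | z :: t => evalFrom u (z :: t) (startPos u z)

/-- `r` is defined on `u`. -/
def Defined (u : List A) (r : List (RLetter A)) : Prop := (evalR u r).isSome

/-- The position `r(u)` (defaulting to `0` when undefined). -/
def pos (u : List A) (r : List (RLetter A)) : ℕ := (evalR u r).getD 0

/-- Do two ranker letters have the same direction? -/
def sameDir : RLetter A → RLetter A → Bool
  | .X _, .X _ => true
  | .Y _, .Y _ => true
  | _, _ => false

/-- Number of (alternating) blocks of a ranker. -/
def numBlocks : List (RLetter A) → ℕ
  | [] => 0
  | [_] => 1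
  | z :: w :: t => (if sameDir z w then 0 else 1) + numBlocks (w :: t)

def startsX (r : List (RLetter A)) : Prop := ∃ a t, r = RLetter.X a :: t
def startsY (r : List (RLetter A)) : Prop := ∃ a t, r = RLetter.Y a :: t
def endsX (r : List (RLetter A)) : Prop := ∃ a, r.getLast? = some (RLetter.X a)
def endsY (r : List (RLetter A)) : Prop := ∃ a, r.getLast? = some (RLetter.Y a)

/-- `R^X_{m,n}`: rankers with exactly `m` blocks, depth `n`, starting with an `X`-block. -/
def RX (m n : ℕ) (r : List (RLetter A)) : Prop :=
  numBlocks r = m ∧ r.length = n ∧ startsX r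

/-- `R^Y_{m,n}`: rankers with exactly `m` blocks, depth `n`, starting with a `Y`-block. -/
def RY (m n : ℕ) (r : List (RLetter A)) : Prop :=
  numBlocks r = m ∧ r.length = n ∧ startsY r

/-- `uR^X_{m,n}`. -/
def uRX (m n : ℕ) (r : List (RLetter A)) : Prop :=
  (∃ m' n', m' ≤ m ∧ n' ≤ n ∧ RX m' n' r) ∨ (∃ m' n', m' < m ∧ n' < n ∧ RY m' n' r)

/-- `uR^Y_{m,n}`. -/
def uRY (m n : ℕ) (r : List (RLetter A)) : Prop :=
  (∃ m' n', m' ≤ m ∧ n' ≤ n ∧ RY m' n' r) ∨ (∃ m' n', m' < m ∧ n' < n ∧ RX m' n' r)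

/-- `uR_{m,n} = uR^X_{m,n} ∪ uR^Y_{m,n}`. -/
def uR (m n : ℕ) (r : List (RLetter A)) : Prop := uRX m n r ∨ uRY m n r

/-- `uR^X_m = ∪_{n ≥ m} uR^X_{m,n}`. -/
def uRXm (m : ℕ) (r : List (RLetter A)) : Prop := ∃ n, m ≤ n ∧ uRX m n r

/-- `uR^Y_m = ∪_{n ≥ m} uR^Y_{m,n}`. -/
def uRYm (m : ℕ) (r : List (RLetter A)) : Prop := ∃ n, m ≤ n ∧ uRY m n r

/-- `r = Z₁ ⋯ Z_n` is condensed on `u`: it is defined on `u` and there is a chain of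
open intervals `(0;|u|+1) = (i₀;j₀) ⊃ (i₁;j₁) ⊃ ⋯ ⊃ (i_{n-1};j_{n-1}) ∋ r(u)`
updated according to the pairs `Z_ℓ Z_{ℓ+1}`. -/
def Condensed (u : List A) (r : List (RLetter A)) : Prop :=
  ∃ (p : ℕ) (i j : ℕ → ℕ),
    evalR u r = some p ∧
    i 0 = 0 ∧ j 0 = u.length + 1 ∧
    (∀ ℓ a b, 1 ≤ ℓ → r[ℓ-1]? = some (RLetter.X a) → r[ℓ]? = some (RLetter.X b) →
        nextOcc u a (i (ℓ-1)) = some (i ℓ) ∧ j ℓ = j (ℓ-1)) ∧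
    (∀ ℓ a b, 1 ≤ ℓ → r[ℓ-1]? = some (RLetter.Y a) → r[ℓ]? = some (RLetter.Y b) →
        i ℓ = i (ℓ-1) ∧ prevOcc u a (j (ℓ-1)) = some (j ℓ)) ∧
    (∀ ℓ a b, 1 ≤ ℓ → r[ℓ-1]? = some (RLetter.X a) → r[ℓ]? = some (RLetter.Y b) →
        i ℓ = i (ℓ-1) ∧ nextOcc u a (i (ℓ-1)) = some (j ℓ)) ∧
    (∀ ℓ a b, 1 ≤ ℓ → r[ℓ-1]? = some (RLetter.Y a) → r[ℓ]? = some (RLetter.X b) →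
        prevOcc u a (j (ℓ-1)) = some (i ℓ) ∧ j ℓ = j (ℓ-1)) ∧
    (∀ ℓ, 1 ≤ ℓ → ℓ < r.length →
        i (ℓ-1) ≤ i ℓ ∧ j ℓ ≤ j (ℓ-1) ∧ (i (ℓ-1) < i ℓ ∨ j ℓ < j (ℓ-1))) ∧
    i (r.length - 1) < p ∧ p < j (r.length - 1)

/-- `u` and `v` agree on rankers from the set `R`. -/
def AgreeDef (R : List (RLetter A) → Prop) (u v : List A) : Prop :=
  ∀ r, R r → (Defined u r ↔ Defined v r)

/-- `u` and `v` agree on condensed rankers from the set `R`. -/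
def AgreeCond (R : List (RLetter A) → Prop) (u v : List A) : Prop :=
  ∀ r, R r → (Condensed u r ↔ Condensed v r)

/-- `u ⊳_{m,n} v`. -/
def trir (m n : ℕ) (u v : List A) : Prop := AgreeCond (uRX m n) u v

/-- `u ⊲_{m,n} v`. -/
def tril (m n : ℕ) (u v : List A) : Prop := AgreeCond (uRY m n) u v

/-- The alphabet (set of letters) of a word. -/
def alph (u : List A) : Finset A := u.toFinset

/-- Condition (WI 1). -/
def WI1 (m n : ℕ) (u v : List A) : Prop := AgreeDef (uR m n) u v

/-- Condition (WI 2). -/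
def WI2 (m n : ℕ) (u v : List A) : Prop :=
  ∀ r r', uR m n r → uR (m-1) (n-1) r' →
    Defined u r → Defined v r → Defined u r' → Defined v r' →
    compare (pos u r) (pos u r') = compare (pos v r) (pos v r')

/-- Condition (WI 3). -/
def WI3 (m n : ℕ) (u v : List A) : Prop :=
  ∀ r r', uR m n r → uR m (n-1) r' →
    ((endsX r ∧ endsY r') ∨ (endsY r ∧ endsX r')) →
    Defined u r → Defined v r → Defined u r' → Defined v r' →
    compare (pos u r) (pos u r') = compare (pos v r) (pos v r')

/-- Condition (WI 1c). -/
def WI1c (m n : ℕ) (u v : List A) : Prop := AgreeCond (uR m n) u v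

/-- Condition (WI 2c). -/
def WI2c (m n : ℕ) (u v : List A) : Prop :=
  ∀ r r', uR m n r → uR (m-1) (n-1) r' →
    Condensed u r → Condensed v r → Condensed u r' → Condensed v r' →
    compare (pos u r) (pos u r') = compare (pos v r) (pos v r')

/-- Condition (WI 3c). -/
def WI3c (m n : ℕ) (u v : List A) : Prop :=
  ∀ r r', uR m n r → uR m (n-1) r' →
    ((endsX r ∧ endsY r') ∨ (endsY r ∧ endsX r')) →
    Condensed u r → Condensed v r → Condensed u r' → Condensed v r' →
    compare (pos u r) (pos u r') = compare (pos v r) (pos v r')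

/-!
Call a defined ranker *nested* if, whenever it passes a position `q` and leaves it in some
direction, all its later positions lie on that side of `q`. The intervals in the definition of
condensedness record exactly these constraints, so condensed rankers are the nested ones.

Whether the position `x` after a prefix `t` lies before or after the position `y` after a prefix `s`
is a matter of definedness: if `t` ends with `X_a`, starting from `x₀`, then `x < y` holds iff
`Y_a` is defined at `y` and leads to a position after `x₀`. Undoing `t` letter by letter in this way
compares `x` with `y` by rankers `s w`, where `w` is a subword of the mirror image of `t`. For the
order of two positions of a ranker with `n` letters in `m` blocks, the lengths of `s` and `t` add up
to at most `2n - 1`, and their numbers of blocks to at most `2m - 1` unless the ranker walks in a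
single direction from one position to the other, in which case their order is clear.
-/

section Letters

omit [DecidableEq A]

namespace RLetter

/-- The alphabet letter carried by a ranker letter. -/
def letter : RLetter A → A
  | .X a => a
  | .Y a => a

/-- The mirror image of a ranker letter: the same alphabet letter, read in the other direction. -/
def flip : RLetter A → RLetter A
  | .X a => .Y a
  | .Y a => .X a

/-- `z.Before p q`: position `p` comes strictly before `q` in the reading direction of `z`. -/
def Before : RLetter A → ℕ → ℕ → Prop
  | .X _, p, q => p < q
  | .Y _, p, q => q < p

@[simp]
theorem letter_flip (z : RLetter A) : z.flip.letter = z.letter := by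
  cases z <;> rfl

@[simp]
theorem flip_flip (z : RLetter A) : z.flip.flip = z := by
  cases z <;> rfl

@[simp]
theorem before_flip {z : RLetter A} {p q : ℕ} : z.flip.Before p q ↔ z.Before q p := by
  cases z <;> rfl

theorem Before.trans {z : RLetter A} {p q r : ℕ} (hpq : z.Before p q) (hqr : z.Before q r) :
    z.Before p r := by
  cases z <;> simp only [Before] at * <;> omega

theorem not_before {z : RLetter A} {p q : ℕ} : ¬ z.Before p q ↔ z.Before q p ∨ p = q := by
  cases z <;> simp only [Before] <;> omega

theorem before_iff_of_sameDir {z w : RLetter A} (h : sameDir z w) {p q : ℕ} :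
    z.Before p q ↔ w.Before p q := by
  cases z <;> cases w <;> simp_all [sameDir, Before]

theorem compare_eq_compare_iff_before (z : RLetter A) {p q p' q' : ℕ} :
    compare p q = compare p' q' ↔
      (z.Before p q ↔ z.Before p' q') ∧ (z.Before q p ↔ z.Before q' p') := by
  cases z <;> simp only [Before, Nat.compare_eq_ite_lt] <;> grind

end RLetter

end Letters

section Occurrences

/-- `IsOcc u a i`: the (1-indexed) position `i` of `u` carries the letter `a`. -/
def IsOcc (u : List A) (a : A) (i : ℕ) : Prop :=
  1 ≤ i ∧ u[i - 1]? = some a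

omit [DecidableEq A] in
theorem IsOcc.le_length {u : List A} {a : A} {i : ℕ} (h : IsOcc u a i) : i ≤ u.length := by
  have := (List.getElem?_eq_some_iff.1 h.2).1
  omega

omit [DecidableEq A] in
theorem IsOcc.letter_unique {u : List A} {a b : A} {i : ℕ} (ha : IsOcc u a i)
    (hb : IsOcc u b i) : a = b :=
  Option.some.inj (ha.2.symm.trans hb.2)

theorem nextOcc_eq_some {u : List A} {a : A} {q x : ℕ} (h : nextOcc u a q = some x) :
    q < x ∧ IsOcc u a x ∧ ∀ i, q < i → IsOcc u a i → x ≤ i := by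
  obtain ⟨ys, hys⟩ := List.head?_eq_some_iff.1 h
  have hsorted := (List.pairwise_lt_range (n := u.length + 2)).filter
    fun i => decide (q < i ∧ u[i - 1]? = some a)
  have hmem (i : ℕ) : i ∈ x :: ys ↔ q < i ∧ IsOcc u a i := by
    rw [← hys, List.mem_filter, List.mem_range, decide_eq_true_eq]
    exact ⟨fun hi => ⟨hi.2.1, by omega, hi.2.2⟩,
      fun hi => ⟨by have := hi.2.le_length; omega, hi.1, hi.2.2⟩⟩
  rw [hys, List.pairwise_cons] at hsorted
  obtain ⟨hqx, hx⟩ := (hmem x).1 List.mem_cons_self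
  refine ⟨hqx, hx, fun i hqi hi => ?_⟩
  obtain rfl | hiys := List.mem_cons.1 ((hmem i).2 ⟨hqi, hi⟩)
  exacts [le_rfl, (hsorted.1 i hiys).le]

theorem prevOcc_eq_some {u : List A} {a : A} {q x : ℕ} (h : prevOcc u a q = some x) :
    x < q ∧ IsOcc u a x ∧ ∀ i, i < q → IsOcc u a i → i ≤ x := by
  obtain ⟨ys, hys⟩ := List.getLast?_eq_some_iff.1 h
  have hsorted := (List.pairwise_lt_range (n := u.length + 2)).filter
    fun i => decide (1 ≤ i ∧ i < q ∧ u[i - 1]? = some a)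
  have hmem (i : ℕ) : i ∈ ys ++ [x] ↔ i < q ∧ IsOcc u a i := by
    rw [← hys, List.mem_filter, List.mem_range, decide_eq_true_eq]
    exact ⟨fun hi => ⟨hi.2.2.1, hi.2.1, hi.2.2.2⟩,
      fun hi => ⟨by have := hi.2.le_length; omega, hi.2.1, hi.1, hi.2.2⟩⟩
  rw [hys, List.pairwise_append] at hsorted
  obtain ⟨hqx, hx⟩ := (hmem x).1 List.mem_concat_self
  refine ⟨hqx, hx, fun i hqi hi => ?_⟩
  obtain hiys | hix := List.mem_append.1 ((hmem i).2 ⟨hqi, hi⟩)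
  exacts [(hsorted.2.2 i hiys x List.mem_cons_self).le, (List.mem_singleton.1 hix).le]

theorem not_isOcc_of_nextOcc_eq_none {u : List A} {a : A} {q : ℕ} (h : nextOcc u a q = none)
    {i : ℕ} (hi : q < i) : ¬ IsOcc u a i := by
  intro hocc
  have hmem := List.filter_eq_nil_iff.1 (List.head?_eq_none_iff.1 h) i
    (List.mem_range.2 (by have := hocc.le_length; omega))
  exact hmem (decide_eq_true ⟨hi, hocc.2⟩)

theorem not_isOcc_of_prevOcc_eq_none {u : List A} {a : A} {q : ℕ} (h : prevOcc u a q = none)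
    {i : ℕ} (hi : i < q) : ¬ IsOcc u a i := by
  intro hocc
  have hmem := List.filter_eq_nil_iff.1 (List.getLast?_eq_none_iff.1 h) i
    (List.mem_range.2 (by have := hocc.le_length; omega))
  exact hmem (decide_eq_true ⟨hocc.1, hi, hocc.2⟩)

end Occurrences

section Steps

variable {u : List A} {z : RLetter A} {q x : ℕ}

theorem before_of_stepR (h : stepR u z q = some x) : z.Before q x := by
  cases z with
  | X a => exact (nextOcc_eq_some h).1
  | Y a => exact (prevOcc_eq_some h).1

theorem isOcc_of_stepR (h : stepR u z q = some x) : IsOcc u z.letter x := by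
  cases z with
  | X a => exact (nextOcc_eq_some h).2.1
  | Y a => exact (prevOcc_eq_some h).2.1

theorem not_before_of_stepR (h : stepR u z q = some x) {i : ℕ} (hi : IsOcc u z.letter i)
    (hqi : z.Before q i) : ¬ z.Before i x := by
  cases z with
  | X a => exact not_lt.2 ((nextOcc_eq_some h).2.2 i hqi hi)
  | Y a => exact not_lt.2 ((prevOcc_eq_some h).2.2 i hqi hi)

theorem exists_stepR_of_isOcc {i : ℕ} (hi : IsOcc u z.letter i) (hqi : z.Before q i) :
    ∃ x, stepR u z q = some x := by
  refine Option.ne_none_iff_exists'.1 fun h => ?_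
  cases z with
  | X a => exact not_isOcc_of_nextOcc_eq_none h hqi hi
  | Y a => exact not_isOcc_of_prevOcc_eq_none h hqi hi

theorem before_iff_exists_stepR_flip (h : stepR u z q = some x) {y : ℕ} :
    z.Before x y ↔ ∃ y₁, stepR u z.flip y = some y₁ ∧ z.Before q y₁ := by
  have hx : IsOcc u z.flip.letter x := by simpa using isOcc_of_stepR h
  constructor
  · intro hxy
    obtain ⟨y₁, hy₁⟩ := exists_stepR_of_isOcc hx (RLetter.before_flip.2 hxy)
    have hle : ¬ z.Before y₁ x := fun hlt =>
      not_before_of_stepR hy₁ hx (RLetter.before_flip.2 hxy) (RLetter.before_flip.2 hlt)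
    obtain hlt | rfl := RLetter.not_before.1 hle
    · exact ⟨y₁, hy₁, (before_of_stepR h).trans hlt⟩
    · exact ⟨y₁, hy₁, before_of_stepR h⟩
  · rintro ⟨y₁, hy₁, hqy₁⟩
    have hy₁y := RLetter.before_flip.1 (before_of_stepR hy₁)
    have hocc : IsOcc u z.letter y₁ := by simpa using isOcc_of_stepR hy₁
    obtain hlt | rfl := RLetter.not_before.1 (not_before_of_stepR h hocc hqy₁)
    exacts [hlt.trans hy₁y, hy₁y]

theorem before_stepR_iff_of_isOcc (h : stepR u z q = some x) {f : A} {y : ℕ}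
    (hy : IsOcc u f y) :
    z.Before y x ↔ if f = z.letter then ¬ z.Before q y else ¬ z.Before x y := by
  have hqx := before_of_stepR h
  have hx := isOcc_of_stepR h
  split_ifs with hf
  · subst hf
    refine ⟨fun hyx hqy => not_before_of_stepR h hy hqy hyx, fun hqy => ?_⟩
    obtain hlt | rfl := RLetter.not_before.1 hqy
    exacts [hlt.trans hqx, hqx]
  · have hyx : x ≠ y := by
      rintro rfl
      exact hf (hy.letter_unique hx)
    rw [RLetter.not_before]
    exact ⟨Or.inl, fun hor => hor.resolve_right hyx⟩

end Steps

section Comparison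

theorem evalFrom_append (u : List A) (s t : List (RLetter A)) (q : ℕ) :
    evalFrom u (s ++ t) q = (evalFrom u s q).bind (evalFrom u t) := by
  induction s generalizing q with
  | nil => rfl
  | cons z s ih => simp only [List.cons_append, evalFrom, ih, Option.bind_assoc]

theorem evalFrom_singleton (u : List A) (z : RLetter A) (q : ℕ) :
    evalFrom u [z] q = stepR u z q := by
  simp only [evalFrom, Option.bind_fun_some]

theorem evalFrom_concat_eq_some {u : List A} {t : List (RLetter A)} {z : RLetter A} {q x : ℕ} :
    evalFrom u (t ++ [z]) q = some x ↔ ∃ p, evalFrom u t q = some p ∧ stepR u z p = some x := by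
  simp only [evalFrom_append, Option.bind_eq_some_iff, evalFrom_singleton]

omit [DecidableEq A] in
theorem compare_startPos_of_isOcc {u v : List A} (z : RLetter A) {f : A} {y y' : ℕ}
    (hy : IsOcc u f y) (hy' : IsOcc v f y') :
    compare (startPos u z) y = compare (startPos v z) y' := by
  have := hy.1
  have := hy'.1
  have := hy.le_length
  have := hy'.le_length
  rw [RLetter.compare_eq_compare_iff_before z]
  cases z <;> simp only [RLetter.Before, startPos] <;> omega

/-- The mirror image of a ranker: its letters in reverse order and with reversed directions. -/
def mirror (t : List (RLetter A)) : List (RLetter A) :=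
  (t.map RLetter.flip).reverse

omit [DecidableEq A] in
theorem mirror_concat (t : List (RLetter A)) (z : RLetter A) :
    mirror (t ++ [z]) = z.flip :: mirror t := by
  simp [mirror]

variable {u v : List A} {z c : RLetter A} {t : List (RLetter A)} {f : A} {x x' y y' q q' : ℕ}

theorem compare_stepR_eq (hx : stepR u c q = some x) (hx' : stepR v c q' = some x')
    (hy : IsOcc u f y) (hy' : IsOcc v f y') (hq : compare q y = compare q' y')
    (hdef : (stepR u c.flip y).isSome ↔ (stepR v c.flip y').isSome)
    (hback : ∀ y₁ y₁', stepR u c.flip y = some y₁ → stepR v c.flip y' = some y₁' →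
      compare q y₁ = compare q' y₁') :
    compare x y = compare x' y' := by
  rw [RLetter.compare_eq_compare_iff_before c] at hq ⊢
  have hxy : c.Before x y ↔ c.Before x' y' := by
    rw [before_iff_exists_stepR_flip hx, before_iff_exists_stepR_flip hx']
    rcases hy₁ : stepR u c.flip y with _ | y₁ <;> rcases hy₁' : stepR v c.flip y' with _ | y₁'
    · simp
    · simp [hy₁, hy₁'] at hdef
    · simp [hy₁, hy₁'] at hdef
    · have hy₁y₁' := hback y₁ y₁' hy₁ hy₁'
      rw [RLetter.compare_eq_compare_iff_before c] at hy₁y₁'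
      simpa using hy₁y₁'.1
  refine ⟨hxy, ?_⟩
  rw [before_stepR_iff_of_isOcc hx hy, before_stepR_iff_of_isOcc hx' hy', hxy, hq.1]

theorem compare_evalFrom_eq (ht : evalFrom u t (startPos u z) = some x)
    (ht' : evalFrom v t (startPos v z) = some x') (hy : IsOcc u f y) (hy' : IsOcc v f y')
    (hdef : ∀ w, w.Sublist (mirror t) → ((evalFrom u w y).isSome ↔ (evalFrom v w y').isSome)) :
    compare x y = compare x' y' := by
  induction t using List.reverseRecOn generalizing x x' y y' f with
  | nil =>
    obtain rfl := Option.some.inj ht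
    obtain rfl := Option.some.inj ht'
    exact compare_startPos_of_isOcc z hy hy'
  | append_singleton t c ih =>
    obtain ⟨q, hq, hx⟩ := evalFrom_concat_eq_some.1 ht
    obtain ⟨q', hq', hx'⟩ := evalFrom_concat_eq_some.1 ht'
    simp only [mirror_concat] at hdef
    refine compare_stepR_eq hx hx' hy hy' (ih hq hq' hy hy' fun w hw => hdef w (hw.cons _)) ?_ ?_
    · simpa only [evalFrom_singleton] using
        hdef [c.flip] ((List.nil_sublist (mirror t)).cons_cons _)
    · intro y₁ y₁' hy₁ hy₁'
      refine ih hq hq' (isOcc_of_stepR hy₁) (isOcc_of_stepR hy₁') fun w hw => ?_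
      simpa only [evalFrom, hy₁, hy₁', Option.bind_some] using
        hdef (c.flip :: w) (hw.cons_cons _)

end Comparison

section Blocks

omit [DecidableEq A]

/-- Consecutive letters have opposite directions, that is, all blocks are single letters. -/
def Alternating (r : List (RLetter A)) : Prop :=
  r.IsChain fun z w => ¬ sameDir z w

private instance : IsEquiv (RLetter A) (fun z w => ¬ sameDir z w)ᶜ where
  refl z := by cases z <;> simp [sameDir]
  symm z w := by cases z <;> cases w <;> simp [sameDir]
  trans z w x := by cases z <;> cases w <;> cases x <;> simp [sameDir]

theorem numBlocks_eq_length_destutter (r : List (RLetter A)) :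
    numBlocks r = (r.destutter fun z w => ¬ sameDir z w).length := by
  induction r with
  | nil => rfl
  | cons z t ih =>
    cases t with
    | nil => rfl
    | cons w t =>
      rw [numBlocks, ih, List.destutter_cons_cons, List.destutter_cons']
      by_cases h : sameDir z w
      · have := List.length_destutter'_congr (R := fun z w => ¬ sameDir z w) (l := t) (not_not.2 h)
        simpa [h] using this.symm
      · simp [h, add_comm]

theorem Alternating.length_le_numBlocks {s r : List (RLetter A)} (hs : Alternating s)
    (hsr : s.Sublist r) : s.length ≤ numBlocks r := by
  rw [numBlocks_eq_length_destutter]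
  exact hs.length_le_length_destutter hsr

theorem exists_alternating_sublist (r : List (RLetter A)) :
    ∃ s, s.Sublist r ∧ Alternating s ∧ s.length = numBlocks r :=
  ⟨_, List.destutter_sublist _ r, List.isChain_destutter _ r,
    (numBlocks_eq_length_destutter r).symm⟩

theorem numBlocks_le_of_sublist {s r : List (RLetter A)} (h : s.Sublist r) :
    numBlocks s ≤ numBlocks r := by
  obtain ⟨d, hds, hd, hlen⟩ := exists_alternating_sublist s
  exact hlen ▸ hd.length_le_numBlocks (hds.trans h)

theorem numBlocks_append_le (s t : List (RLetter A)) :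
    numBlocks (s ++ t) ≤ numBlocks s + numBlocks t := by
  obtain ⟨d, hd, halt, hlen⟩ := exists_alternating_sublist (s ++ t)
  obtain ⟨d₁, d₂, rfl, hd₁, hd₂⟩ := List.sublist_append_iff.1 hd
  have h₁ := Alternating.length_le_numBlocks halt.left_of_append hd₁
  have h₂ := Alternating.length_le_numBlocks halt.right_of_append hd₂
  rw [List.length_append] at hlen
  omega

theorem Alternating.mirror {r : List (RLetter A)} (h : Alternating r) :
    Alternating (mirror r) := by
  rw [Alternating, RankerPaper.mirror, List.isChain_reverse, List.isChain_map]
  refine h.imp fun z w hzw => ?_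
  cases z <;> cases w <;> simp_all [sameDir, RLetter.flip]

theorem numBlocks_mirror_le (t : List (RLetter A)) : numBlocks (mirror t) ≤ numBlocks t := by
  obtain ⟨d, hd, halt, hlen⟩ := exists_alternating_sublist (mirror t)
  have hmirror : (mirror d).Sublist t := by
    simpa [mirror, Function.comp_def] using (hd.map RLetter.flip).reverse
  have := halt.mirror.length_le_numBlocks hmirror
  simp only [mirror, List.length_reverse, List.length_map] at this
  omega

theorem numBlocks_lt_of_sublist {s r : List (RLetter A)} {a b : RLetter A}
    (hab : ¬ sameDir a b) (h : (s ++ [a, b]).Sublist r) : numBlocks s < numBlocks r := by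
  obtain ⟨d, hds, hd, hlen⟩ := exists_alternating_sublist s
  obtain ⟨c, hc, hdc⟩ : ∃ c ∈ [a, b], ∀ e ∈ d.getLast?, ¬ sameDir e c := by
    rcases d.getLast? with _ | e
    · exact ⟨a, by simp⟩
    · revert hab
      cases a <;> cases b <;> cases e <;> simp [sameDir]
  have halt : Alternating (d ++ [c]) :=
    List.isChain_append.2 ⟨hd, .singleton c, by simpa using hdc⟩
  have hsub : (d ++ [c]).Sublist r :=
    (hds.append (List.singleton_sublist.2 hc)).trans h
  have := halt.length_le_numBlocks hsub
  rw [List.length_append, List.length_singleton] at this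
  omega

end Blocks

section Condensed

variable {u : List A} {r : List (RLetter A)}

/-- The position from which `r` is evaluated on `u`. -/
def origin (u : List A) : List (RLetter A) → ℕ
  | [] => 0
  | z :: _ => startPos u z

/-- The position reached on `u` after the first `k` letters of `r`, with the junk value `0` when
these letters are not defined. The prefix is evaluated from the origin of `r`, so that `k = 0`
yields this origin. -/
def visit (u : List A) (r : List (RLetter A)) (k : ℕ) : ℕ :=
  (evalFrom u (r.take k) (origin u r)).getD 0

theorem Defined.length_pos (h : Defined u r) : 0 < r.length := by
  cases r with
  | nil => cases h
  | cons z t => exact Nat.succ_pos _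

theorem evalR_eq_evalFrom_origin (hr : 0 < r.length) :
    evalR u r = evalFrom u r (origin u r) := by
  cases r with
  | nil => cases hr
  | cons z t => rfl

theorem Defined.evalFrom_take (h : Defined u r) (k : ℕ) :
    evalFrom u (r.take k) (origin u r) = some (visit u r k) := by
  obtain ⟨p, hp⟩ := Option.isSome_iff_exists.1 h
  rw [evalR_eq_evalFrom_origin h.length_pos, ← List.take_append_drop k r, evalFrom_append,
    List.take_append_drop] at hp
  obtain ⟨q, hq, -⟩ := Option.bind_eq_some_iff.1 hp
  rw [visit, hq, Option.getD_some]

theorem Defined.evalR_eq (h : Defined u r) : evalR u r = some (visit u r r.length) := by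
  rw [evalR_eq_evalFrom_origin h.length_pos, ← h.evalFrom_take, List.take_length]

theorem visit_zero (hr : 0 < r.length) : visit u r 0 = startPos u r[0] := by
  cases r with
  | nil => cases hr
  | cons z t => rfl

theorem Defined.stepR_visit (h : Defined u r) {k : ℕ} (hk : k < r.length) :
    stepR u r[k] (visit u r k) = some (visit u r (k + 1)) := by
  have hnext := h.evalFrom_take (k + 1)
  rw [List.take_add_one, List.getElem?_eq_getElem hk, Option.toList_some,
    evalFrom_concat_eq_some] at hnext
  obtain ⟨p, hp, hstep⟩ := hnext
  rwa [Option.some.inj ((h.evalFrom_take k).symm.trans hp)]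

/-- Each letter of `r` leaves a position of `u` which all later positions of the evaluation stay
strictly beyond, in the direction of that letter. -/
def Nested (u : List A) (r : List (RLetter A)) : Prop :=
  ∀ k l (_ : k < l) (_ : l ≤ r.length), r[k].Before (visit u r k) (visit u r l)

/-- The end of the interval `I = (I.1; I.2)` from which a letter `z` searches. -/
def entry (z : RLetter A) (I : ℕ × ℕ) : ℕ :=
  match z with
  | .X _ => I.1
  | .Y _ => I.2

/-- The interval obtained from `I` by moving the end from which `z` searches to `x`. -/
def restrict (z : RLetter A) (x : ℕ) (I : ℕ × ℕ) : ℕ × ℕ :=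
  match z with
  | .X _ => (x, I.2)
  | .Y _ => (I.1, x)

/-- The interval `(i_k; j_k)` from the definition of condensed rankers, for `k < r.length`: the
update prescribed by two consecutive letters `Z_k Z_{k+1}` moves the end from which `Z_{k+1}`
searches to the position reached by `Z_k`. -/
def interval (u : List A) (r : List (RLetter A)) : ℕ → ℕ × ℕ
  | 0 => (0, u.length + 1)
  | k + 1 => match r[k + 1]? with
    | some z => restrict z (visit u r (k + 1)) (interval u r k)
    | none => interval u r k

theorem interval_succ {k : ℕ} (hk : k + 1 < r.length) :
    interval u r (k + 1) = restrict r[k + 1] (visit u r (k + 1)) (interval u r k) := by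
  rw [interval, List.getElem?_eq_getElem hk]

theorem entry_interval {k : ℕ} (hk : k < r.length) :
    entry r[k] (interval u r k) = visit u r k := by
  cases k with
  | zero => rw [visit_zero hk]; cases r[0] <;> rfl
  | succ k => rw [interval_succ hk]; cases r[k + 1] <;> rfl

omit [DecidableEq A] in
theorem RLetter.before_entry {z : RLetter A} {I : ℕ × ℕ} {x : ℕ} (hx : x ∈ Set.Ioo I.1 I.2) :
    z.Before (entry z I) x := by
  cases z
  exacts [hx.1, hx.2]

omit [DecidableEq A] in
theorem mem_Ioo_restrict {z : RLetter A} {I : ℕ × ℕ} {q x : ℕ} (hx : x ∈ Set.Ioo I.1 I.2)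
    (hqx : z.Before q x) : x ∈ Set.Ioo (restrict z q I).1 (restrict z q I).2 := by
  cases z
  exacts [⟨hqx, hx.2⟩, ⟨hx.1, hqx⟩]

omit [DecidableEq A] in
theorem Ioo_restrict_subset {z : RLetter A} {I : ℕ × ℕ} {q : ℕ} (hq : q ∈ Set.Ioo I.1 I.2) :
    Set.Ioo (restrict z q I).1 (restrict z q I).2 ⊆ Set.Ioo I.1 I.2 := by
  cases z
  exacts [Set.Ioo_subset_Ioo_left hq.1.le, Set.Ioo_subset_Ioo_right hq.2.le]

/-- `StrictlyInside J I`: the interval `J = (J.1; J.2)` is obtained from `I` by moving at least one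
of its ends inwards. -/
def StrictlyInside (J I : ℕ × ℕ) : Prop :=
  I.1 ≤ J.1 ∧ J.2 ≤ I.2 ∧ (I.1 < J.1 ∨ J.2 < I.2)

omit [DecidableEq A] in
theorem strictlyInside_restrict_iff {z : RLetter A} {I : ℕ × ℕ} {q x : ℕ}
    (hx : x ∈ Set.Ioo (restrict z q I).1 (restrict z q I).2) :
    StrictlyInside (restrict z q I) I ↔ q ∈ Set.Ioo I.1 I.2 := by
  obtain ⟨hlo, hhi⟩ := hx
  cases z <;> simp only [StrictlyInside, restrict, Set.mem_Ioo] at * <;> omega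

theorem Defined.isOcc_visit (h : Defined u r) {k : ℕ} (hk : k < r.length) :
    IsOcc u r[k].letter (visit u r (k + 1)) :=
  isOcc_of_stepR (h.stepR_visit hk)

theorem Nested.visit_mem_interval (hnest : Nested u r) (h : Defined u r) {k l : ℕ} (hkl : k < l)
    (hl : l ≤ r.length) : visit u r l ∈ Set.Ioo (interval u r k).1 (interval u r k).2 := by
  induction k with
  | zero =>
    obtain ⟨l, rfl⟩ := Nat.exists_eq_add_of_le' hkl
    have hocc := h.isOcc_visit hl
    exact ⟨hocc.1, Nat.lt_succ_of_le hocc.le_length⟩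
  | succ k ih =>
    rw [interval_succ (by omega)]
    exact mem_Ioo_restrict (ih (by omega)) (hnest (k + 1) l hkl hl)

theorem nested_of_visit_mem_interval
    (hmem : ∀ k < r.length, visit u r (k + 1) ∈ Set.Ioo (interval u r k).1 (interval u r k).2) :
    Nested u r := by
  intro k l hkl hl
  obtain ⟨d, rfl⟩ := Nat.exists_eq_add_of_lt hkl
  have hsub : Set.Ioo (interval u r (k + d)).1 (interval u r (k + d)).2 ⊆
      Set.Ioo (interval u r k).1 (interval u r k).2 := by
    clear hkl
    induction d with
    | zero => exact subset_rfl
    | succ d ih =>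
      refine Set.Subset.trans ?_ (ih (by omega))
      rw [← add_assoc, interval_succ (by omega)]
      exact Ioo_restrict_subset (hmem (k + d) (by omega))
  rw [← entry_interval (show k < r.length by omega)]
  exact RLetter.before_entry (hsub (hmem (k + d) hl))

/-- The intervals `I k = (i_k; j_k)` witness that the ranker `r` is condensed on `u`. -/
structure IsIntervalChain (u : List A) (r : List (RLetter A)) (I : ℕ → ℕ × ℕ) : Prop where
  zero : I 0 = (0, u.length + 1)
  step : ∀ k (_ : k + 1 < r.length), ∃ x, stepR u r[k] (entry r[k] (I k)) = some x ∧
    I (k + 1) = restrict r[k + 1] x (I k)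
  nested : ∀ k, k + 1 < r.length → StrictlyInside (I (k + 1)) (I k)
  last : ∃ p, evalR u r = some p ∧ p ∈ Set.Ioo (I (r.length - 1)).1 (I (r.length - 1)).2

theorem condensed_iff_exists_isIntervalChain :
    Condensed u r ↔ ∃ I, IsIntervalChain u r I := by
  constructor
  · rintro ⟨p, i, j, hp, hi, hj, hXX, hYY, hXY, hYX, hsub, hlast⟩
    refine ⟨fun k => (i k, j k), by rw [hi, hj], fun k hk => ?_,
      fun k hk => hsub (k + 1) (Nat.le_add_left 1 k) hk, p, hp, hlast⟩
    have hz : r[k + 1 - 1]? = some r[k] := List.getElem?_eq_getElem _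
    have hw : r[k + 1]? = some r[k + 1] := List.getElem?_eq_getElem _
    have hk' : 1 ≤ k + 1 := Nat.le_add_left 1 k
    generalize r[k] = z, r[k + 1] = w at hz hw ⊢
    rcases z with a | a <;> rcases w with b | b
    · exact ⟨_, (hXX _ a b hk' hz hw).1, Prod.ext rfl (hXX _ a b hk' hz hw).2⟩
    · exact ⟨_, (hXY _ a b hk' hz hw).2, Prod.ext (hXY _ a b hk' hz hw).1 rfl⟩
    · exact ⟨_, (hYX _ a b hk' hz hw).1, Prod.ext rfl (hYX _ a b hk' hz hw).2⟩
    · exact ⟨_, (hYY _ a b hk' hz hw).2, Prod.ext (hYY _ a b hk' hz hw).1 rfl⟩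
  · rintro ⟨I, hI⟩
    obtain ⟨p, hp, hlast⟩ := hI.last
    have hstep (k z w) (hk : 1 ≤ k) (hz : r[k - 1]? = some z) (hw : r[k]? = some w) :
        ∃ x, stepR u z (entry z (I (k - 1))) = some x ∧ I k = restrict w x (I (k - 1)) := by
      obtain ⟨k, rfl⟩ := Nat.exists_eq_add_of_le' hk
      obtain ⟨hk', rfl⟩ := List.getElem?_eq_some_iff.1 hw
      obtain ⟨-, rfl⟩ := List.getElem?_eq_some_iff.1 hz
      exact hI.step k hk'
    refine ⟨p, fun k => (I k).1, fun k => (I k).2, hp, congrArg Prod.fst hI.zero,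
      congrArg Prod.snd hI.zero, ?_, ?_, ?_, ?_, ?_, hlast⟩
    case refine_5 =>
      intro k hk hkr
      obtain ⟨k, rfl⟩ := Nat.exists_eq_add_of_le' hk
      exact hI.nested k hkr
    all_goals
      intro k a b hk hz hw
      obtain ⟨x, hx, hIx⟩ := hstep k _ _ hk hz hw
      simpa [hIx, restrict, stepR, entry] using hx

theorem IsIntervalChain.eq_interval {I : ℕ → ℕ × ℕ} (hI : IsIntervalChain u r I) (h : Defined u r)
    {k : ℕ} (hk : k < r.length) : I k = interval u r k := by
  induction k with
  | zero => exact hI.zero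
  | succ k ih =>
    obtain ⟨x, hx, hIx⟩ := hI.step k hk
    rw [ih (by omega), entry_interval, h.stepR_visit, Option.some_inj] at hx
    rw [hIx, ih (by omega), interval_succ hk, hx]

theorem IsIntervalChain.visit_mem_interval {I : ℕ → ℕ × ℕ} (hI : IsIntervalChain u r I)
    (h : Defined u r) {k : ℕ} (hk : k < r.length) :
    visit u r (k + 1) ∈ Set.Ioo (interval u r k).1 (interval u r k).2 := by
  refine Nat.decreasingInduction' (n := r.length - 1) (P := fun k =>
    visit u r (k + 1) ∈ Set.Ioo (interval u r k).1 (interval u r k).2) ?_ (by omega) ?_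
  · intro k hk _ hnext
    have hk' : k + 1 < r.length := by omega
    have hinside := hI.nested k hk'
    rw [hI.eq_interval h hk', hI.eq_interval h (Nat.lt_of_succ_lt hk')] at hinside
    rw [interval_succ hk'] at hinside hnext
    exact (strictlyInside_restrict_iff hnext).1 hinside
  · obtain ⟨p, hp, hlast⟩ := hI.last
    rw [h.evalR_eq, Option.some_inj] at hp
    rw [hI.eq_interval h (by omega)] at hlast
    rwa [Nat.sub_add_cancel (by omega), hp]

theorem Nested.isIntervalChain_interval (hnest : Nested u r) (h : Defined u r) :
    IsIntervalChain u r (interval u r) where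
  zero := rfl
  step k hk := ⟨visit u r (k + 1), by rw [entry_interval, h.stepR_visit], interval_succ hk⟩
  nested k hk := by
    have hmem := hnest.visit_mem_interval h (Nat.lt_succ_self (k + 1)) hk
    rw [interval_succ hk] at hmem ⊢
    exact (strictlyInside_restrict_iff hmem).2
      (hnest.visit_mem_interval h (Nat.lt_succ_self k) (Nat.le_of_succ_le hk))
  last := ⟨_, h.evalR_eq, hnest.visit_mem_interval h (Nat.sub_lt h.length_pos one_pos) le_rfl⟩

theorem condensed_iff_defined_and_nested : Condensed u r ↔ Defined u r ∧ Nested u r := by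
  rw [condensed_iff_exists_isIntervalChain]
  constructor
  · rintro ⟨I, hI⟩
    obtain ⟨p, hp, -⟩ := hI.last
    have h : Defined u r := Option.isSome_iff_exists.2 ⟨p, hp⟩
    exact ⟨h, nested_of_visit_mem_interval fun k hk => hI.visit_mem_interval h hk⟩
  · rintro ⟨h, hnest⟩
    exact ⟨_, hnest.isIntervalChain_interval h⟩

end Condensed

section Transfer

variable {u v : List A} {z : RLetter A} {t : List (RLetter A)}

theorem Defined.before_visit_of_sameDir {r : List (RLetter A)} (h : Defined u r) {k l : ℕ}
    (hkl : k < l) (hl : l ≤ r.length)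
    (hdir : ∀ i (_ : k < i) (_ : i < l), sameDir r[k] r[i]) :
    r[k].Before (visit u r k) (visit u r l) := by
  induction l, hkl using Nat.le_induction with
  | base => exact before_of_stepR (h.stepR_visit hl)
  | succ l hkl ih =>
    have hstep := before_of_stepR (h.stepR_visit hl)
    rw [← RLetter.before_iff_of_sameDir (hdir l hkl (Nat.lt_succ_self l))] at hstep
    exact (ih (Nat.le_of_succ_le hl) fun i hki hil => hdir i hki (by omega)).trans hstep

omit [DecidableEq A] in
theorem numBlocks_take_lt_of_not_sameDir {r : List (RLetter A)} {k i : ℕ} (hki : k < i)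
    (hi : i < r.length) (hdir : ¬ sameDir r[k] r[i]) : numBlocks (r.take k) < numBlocks r := by
  refine numBlocks_lt_of_sublist hdir ?_
  have hdrop : [r[k], r[i]].Sublist (r.drop k) := by
    rw [List.drop_eq_getElem_cons (by omega)]
    refine List.Sublist.cons_cons _ (List.singleton_sublist.2 ?_)
    exact List.mem_drop_iff_getElem.2 ⟨i - (k + 1), by omega, by congr 1; omega⟩
  simpa using (List.Sublist.refl (r.take k)).append hdrop

theorem Defined.isSome_evalFrom_visit {k : ℕ} (hu : Defined u (z :: t)) (w : List (RLetter A)) :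
    (evalFrom u w (visit u (z :: t) (k + 1))).isSome ↔ Defined u (z :: (t.take k ++ w)) := by
  have hprefix : evalFrom u (z :: t.take k) (startPos u z) = some (visit u (z :: t) (k + 1)) :=
    hu.evalFrom_take (k + 1)
  rw [Defined, evalR, ← List.cons_append, evalFrom_append, hprefix, Option.bind_some]

/-- The words `u` and `v` agree on the rankers that start with `z`, have at most `m` blocks and have
depth at most `n`. -/
def AgreeFrom (z : RLetter A) (m n : ℕ) (u v : List A) : Prop :=
  ∀ t, numBlocks (z :: t) ≤ m → (z :: t).length ≤ n → (Defined u (z :: t) ↔ Defined v (z :: t))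

theorem AgreeFrom.symm {m n : ℕ} (h : AgreeFrom z m n u v) : AgreeFrom z m n v u :=
  fun t hm hn => (h t hm hn).symm

theorem compare_visit_eq
    (hagree : AgreeFrom z (2 * numBlocks (z :: t) - 1) (2 * (z :: t).length - 1) u v)
    (hu : Defined u (z :: t)) (hv : Defined v (z :: t)) {k l : ℕ} (hkl : k < l)
    (hl : l ≤ (z :: t).length) (hblocks : numBlocks ((z :: t).take k) < numBlocks (z :: t)) :
    compare (visit u (z :: t) k) (visit u (z :: t) l) =
      compare (visit v (z :: t) k) (visit v (z :: t) l) := by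
  obtain ⟨l, rfl⟩ := Nat.exists_eq_add_of_le' (Nat.one_le_of_lt hkl)
  refine compare_evalFrom_eq (z := z) (hu.evalFrom_take k) (hv.evalFrom_take k)
    (hu.isOcc_visit hl) (hv.isOcc_visit hl) fun w hw => ?_
  rw [hu.isSome_evalFrom_visit, hv.isSome_evalFrom_visit]
  apply hagree
  · have hsplit := numBlocks_append_le ((z :: t).take (l + 1)) w
    have hprefix := numBlocks_le_of_sublist (List.take_sublist (l + 1) (z :: t))
    have hw' := (numBlocks_le_of_sublist hw).trans (numBlocks_mirror_le _)
    rw [List.take_succ_cons, List.cons_append] at hsplit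
    rw [List.take_succ_cons] at hprefix
    omega
  · have hlen := hw.length_le
    simp only [mirror, List.length_reverse, List.length_map, List.length_take, List.length_cons,
      List.length_append] at hlen hl ⊢
    omega

theorem Nested.of_agreeFrom
    (hagree : AgreeFrom z (2 * numBlocks (z :: t) - 1) (2 * (z :: t).length - 1) u v)
    (hu : Defined u (z :: t)) (hv : Defined v (z :: t)) (hnest : Nested u (z :: t)) :
    Nested v (z :: t) := by
  intro k l hkl hl
  by_cases hdir : ∀ i (_ : k < i) (_ : i < l), sameDir (z :: t)[k] (z :: t)[i]
  · exact hv.before_visit_of_sameDir hkl hl hdir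
  · push Not at hdir
    obtain ⟨i, hki, hil, hturn⟩ := hdir
    have hcompare := compare_visit_eq hagree hu hv hkl hl
      (numBlocks_take_lt_of_not_sameDir hki (by omega) hturn)
    exact (((z :: t)[k].compare_eq_compare_iff_before).1 hcompare).1.1 (hnest k l hkl hl)

theorem condensed_iff_of_agreeFrom
    (hagree : AgreeFrom z (2 * numBlocks (z :: t) - 1) (2 * (z :: t).length - 1) u v) :
    Condensed u (z :: t) ↔ Condensed v (z :: t) := by
  have hblocks : 1 ≤ numBlocks (z :: t) :=
    Alternating.length_le_numBlocks (.singleton z) (List.singleton_sublist.2 List.mem_cons_self)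
  have hdef : Defined u (z :: t) ↔ Defined v (z :: t) :=
    hagree t (by omega) (by rw [List.length_cons]; omega)
  rw [condensed_iff_defined_and_nested, condensed_iff_defined_and_nested]
  constructor
  · rintro ⟨hu, hnest⟩
    exact ⟨hdef.1 hu, hnest.of_agreeFrom hagree hu (hdef.1 hu)⟩
  · rintro ⟨hv, hnest⟩
    exact ⟨hdef.2 hv, hnest.of_agreeFrom hagree.symm hv (hdef.2 hv)⟩

end Transfer

section RankerSets

omit [DecidableEq A]

variable {m n : ℕ} {a : A} {t : List (RLetter A)}

theorem uRX_X_cons : uRX m n (.X a :: t) ↔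
    numBlocks (.X a :: t) ≤ m ∧ (RLetter.X a :: t).length ≤ n := by
  simp [uRX, RX, RY, startsX, startsY]

theorem uRX_Y_cons : uRX m n (.Y a :: t) ↔
    numBlocks (.Y a :: t) < m ∧ (RLetter.Y a :: t).length < n := by
  simp [uRX, RX, RY, startsX, startsY]

theorem uRY_Y_cons : uRY m n (.Y a :: t) ↔
    numBlocks (.Y a :: t) ≤ m ∧ (RLetter.Y a :: t).length ≤ n := by
  simp [uRY, RX, RY, startsX, startsY]

theorem uRY_X_cons : uRY m n (.X a :: t) ↔
    numBlocks (.X a :: t) < m ∧ (RLetter.X a :: t).length < n := by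
  simp [uRY, RX, RY, startsX, startsY]

theorem ne_nil_of_uRX_or_uRY {r : List (RLetter A)} (h : uRX m n r ∨ uRY m n r) : r ≠ [] := by
  rintro rfl
  simp [uRX, uRY, RX, RY, startsX, startsY] at h

theorem uRX_of_le_double {z : RLetter A} {s : List (RLetter A)} (h : uRX m n (z :: t))
    (hblocks : numBlocks (z :: s) ≤ 2 * numBlocks (z :: t) - 1)
    (hlen : (z :: s).length ≤ 2 * (z :: t).length - 1) : uRX (2 * m - 1) (2 * n - 1) (z :: s) := by
  cases z <;> simp only [uRX_X_cons, uRX_Y_cons] at h ⊢ <;> omega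

theorem uRY_of_le_double {z : RLetter A} {s : List (RLetter A)} (h : uRY m n (z :: t))
    (hblocks : numBlocks (z :: s) ≤ 2 * numBlocks (z :: t) - 1)
    (hlen : (z :: s).length ≤ 2 * (z :: t).length - 1) : uRY (2 * m - 1) (2 * n - 1) (z :: s) := by
  cases z <;> simp only [uRY_X_cons, uRY_Y_cons] at h ⊢ <;> omega

end RankerSets

/-- Agreement on rankers from `uR^Z_{2m-1,2n-1}` implies agreement on
condensed rankers from `uR^Z_{m,n}`. -/
theorem statement16 (m n : ℕ) (hm : 1 ≤ m) (hmn : m ≤ n)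
    (ZR : ℕ → ℕ → List (RLetter A) → Prop) (hZR : ZR = uRX ∨ ZR = uRY)
    (u v : List A)
    (h : ∀ r, ZR (2*m-1) (2*n-1) r → (Defined u r ↔ Defined v r)) :
    ∀ r, ZR m n r → (Condensed u r ↔ Condensed v r) := by
  intro r hr
  have hne : r ≠ [] := ne_nil_of_uRX_or_uRY <| by
    rcases hZR with rfl | rfl
    exacts [.inl hr, .inr hr]
  obtain ⟨z, t, rfl⟩ := List.exists_cons_of_ne_nil hne
  refine condensed_iff_of_agreeFrom fun s hblocks hlen => h (z :: s) ?_
  rcases hZR with rfl | rfl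
  · exact uRX_of_le_double hr hblocks hlen
  · exact uRY_of_le_double hr hblocks hlen

end RankerPaper
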